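/- Let K be a local class of finite Σ-structures. For any B ∈ K and any k < |B|, N(B,k) = ∏_{X ⊆ |B|, |X| = k+1} N(B↾X, k), where B↾X denotes the induced substructure of B on X. -/

import Mathlib

open FirstOrder FirstOrder.Language

universe u v

/-- A finite structure for a relational signature `L`, with underlying set a finite subset of `ℕ`,
given by its relation interpretations (sets of tuples of natural numbers). -/
structure FinStruc (L : FirstOrder.Language.{u, v}) where
  carrier : Finset ℕ
  rel : ∀ ⦃n : ℕ⦄, L.Relations n → Set (Fin n → ℕ)
  rel_mem : ∀ ⦃n : ℕ⦄ (R : L.Relations n) (t : Fin n → ℕ), t ∈ rel R → ∀ i, t i ∈ carrier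

variable {L : FirstOrder.Language.{u, v}}

/-- The first-order structure on the underlying set of a `FinStruc`. -/
instance FinStruc.str [L.IsRelational] (A : FinStruc L) :
    L.Structure {x : ℕ // x ∈ A.carrier} where
  funMap := fun f _ => isEmptyElim f
  RelMap := fun {n} R t => (fun i => (t i : ℕ)) ∈ A.rel R

/-- Satisfaction of a sentence in a `FinStruc`. -/
def FinStruc.Sat [L.IsRelational] (A : FinStruc L) (φ : L.Sentence) : Prop :=
  {x : ℕ // x ∈ A.carrier} ⊨ φ

/-- The General Irreflexivity axiom for a relation symbol `R` and coordinates `i`, `j`: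
`∀ x₁ … xₙ, R (x₁, …, xₙ) → ¬ (xᵢ = xⱼ)`. -/
def giSentence {n : ℕ} (R : L.Relations n) (i j : Fin n) : L.Sentence :=
  BoundedFormula.alls
    ((Relations.boundedFormula R fun k => Term.var (Sum.inr k)).imp
      (Term.bdEqual (Term.var (Sum.inr i)) (Term.var (Sum.inr j))).not)

/-- The General Irreflexivity axiom schema `Φ^Σ_GI`. -/
def GITheory (L : FirstOrder.Language.{u, v}) : L.Theory :=
  { φ | ∃ (n : ℕ) (R : L.Relations n) (i j : Fin n), i ≠ j ∧ φ = giSentence R i j }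

/-- A sentence is local if it has the form `∀ x₁ … xₘ, R (x₁, …, xₘ) → ψ` with `m > 0` and
`ψ` quantifier-free. -/
def IsLocalSentence (φ : L.Sentence) : Prop :=
  ∃ m : ℕ, 0 < m ∧ ∃ (R : L.Relations m) (ψ : L.BoundedFormula Empty m), ψ.IsQF ∧
    φ = BoundedFormula.alls ((Relations.boundedFormula R fun k => Term.var (Sum.inr k)).imp ψ)

/-- A class of finite structures is local if it is the class of models of a set of local
sentences containing the General Irreflexivity axioms. -/
def IsLocalClass [L.IsRelational] (K : Set (FinStruc L)) : Prop :=
  ∃ Φ : L.Theory, (∀ φ ∈ Φ, IsLocalSentence φ) ∧ GITheory L ⊆ Φ ∧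
    K = { A : FinStruc L | ∀ φ ∈ Φ, A.Sat φ }

/-- The `n`-frame of a structure: same underlying set, same interpretations of relation symbols
of arity at most `n`, empty interpretation of all higher-arity relation symbols. -/
def FinStruc.frame (A : FinStruc L) (n : ℕ) : FinStruc L where
  carrier := A.carrier
  rel := fun m R => if m ≤ n then A.rel R else ∅
  rel_mem := by
    intro m R t ht i
    by_cases h : m ≤ n
    · exact A.rel_mem R t (by simpa [h] using ht) i
    · simp [h] at ht

/-- The induced substructure of `B` on a finite set `X`. -/
def FinStruc.restrict (B : FinStruc L) (X : Finset ℕ) : FinStruc L where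
  carrier := B.carrier ∩ X
  rel := fun _ R => { t | t ∈ B.rel R ∧ ∀ i, t i ∈ X }
  rel_mem := fun _ R t ht i => Finset.mem_inter.2 ⟨B.rel_mem R t ht.1 i, ht.2 i⟩

/-- `A` is the induced substructure of `B` on the subset `A.carrier` of `B.carrier`. -/
def FinStruc.IsInducedSub (A B : FinStruc L) : Prop :=
  A.carrier ⊆ B.carrier ∧
    ∀ ⦃n : ℕ⦄ (R : L.Relations n) (t : Fin n → ℕ),
      (∀ i, t i ∈ A.carrier) → (t ∈ A.rel R ↔ t ∈ B.rel R)

/-- `A` is isomorphic to `B`: there is a bijection of the underlying sets preserving all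
relations in both directions. -/
def FinStruc.IsIsoTo (A B : FinStruc L) : Prop :=
  ∃ f : ℕ → ℕ, Set.BijOn f ↑A.carrier ↑B.carrier ∧
    ∀ ⦃n : ℕ⦄ (R : L.Relations n) (t : Fin n → ℕ), (∀ i, t i ∈ A.carrier) →
      (t ∈ A.rel R ↔ (fun i => f (t i)) ∈ B.rel R)

/-- The Adoptive Property. -/
def AdoptiveProperty (K : Set (FinStruc L)) : Prop :=
  ∀ (n : ℕ) (B A A' : FinStruc L), B ∈ K → A ∈ K → A' ∈ K →
    A.IsInducedSub B → A.carrier.card = n → A'.carrier = A.carrier →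
    A'.frame (n - 1) = A.frame (n - 1) →
    ∃ B' ∈ K, B'.carrier = B.carrier ∧ B'.frame (n - 1) = B.frame (n - 1) ∧
      ∀ R : L.Relations n,
        B'.rel R = (B.rel R \ { t | ∀ i, t i ∈ A.carrier }) ∪ A'.rel R

/-- A structure for `L` with underlying set `ℕ`, given by its relation interpretations. -/
structure InfStruc (L : FirstOrder.Language.{u, v}) where
  rel : ∀ ⦃n : ℕ⦄, L.Relations n → Set (Fin n → ℕ)

/-- The first-order structure on `ℕ` determined by an `InfStruc`. -/
def InfStruc.str [L.IsRelational] (M : InfStruc L) : L.Structure ℕ where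
  funMap := fun f _ => isEmptyElim f
  RelMap := fun {n} R t => t ∈ M.rel R

/-- Satisfaction of a sentence in an `InfStruc`. -/
def InfStruc.Sat [L.IsRelational] (M : InfStruc L) (φ : L.Sentence) : Prop :=
  @FirstOrder.Language.Sentence.Realize L ℕ M.str φ

/-- The induced finite substructure of an `InfStruc` on a finite set `X`. -/
def InfStruc.restrict (M : InfStruc L) (X : Finset ℕ) : FinStruc L where
  carrier := X
  rel := fun _ R => { t | t ∈ M.rel R ∧ ∀ i, t i ∈ X }
  rel_mem := fun _ _ _ ht i => ht.2 i

/-- The bundled structures isomorphic to a member of `K`. -/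
def toBundled (L : FirstOrder.Language.{u, v}) [L.IsRelational] (K : Set (FinStruc L)) :
    Set (CategoryTheory.Bundled.{0} L.Structure) :=
  { M | ∃ A ∈ K, Nonempty (M ≃[L] {x : ℕ // x ∈ A.carrier}) }

/-- `K^{X,l}_{A,k}`: the set of `l`-frames of members `B` of `K` with underlying set `X` whose
`k`-frame restricted to the underlying set of `A` is the `k`-frame of `A`. -/
def KsetFr (K : Set (FinStruc L)) (X : Finset ℕ) (l : ℕ) (A : FinStruc L) (k : ℕ) :
    Set (FinStruc L) :=
  { F | ∃ B ∈ K, B.carrier = X ∧ (B.frame k).restrict A.carrier = A.frame k ∧ F = B.frame l }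

/-- `N(S,k)`: the number of distinct `(k+1)`-frames of members of `K` on the underlying set of `S`
whose `k`-frame is the `k`-frame of `S`. -/
noncomputable def Ncount (K : Set (FinStruc L)) (S : FinStruc L) (k : ℕ) : ℕ :=
  (KsetFr K S.carrier (k + 1) S k).ncard

/-! Restriction to the `(k + 1)`-element subsets `X` of `B` is a bijection from the `(k + 1)`-frames
over `B` to the families of `(k + 1)`-frames over the `B.restrict X`. By General Irreflexivity, a
`(k + 1)`-tuple in a relation has as its entries exactly one `(k + 1)`-element subset, so frames on
different subsets make independent choices of `(k + 1)`-ary relations; hence injectivity, and a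
family of frames glues to a unique candidate. The candidate lies in `K` because a local sentence
only constrains the substructure on the entries of a tuple in some relation: a structure belongs to
`K` as soon as every such tuple lies in a subset inducing a member of `K`. -/

attribute [ext] FinStruc

namespace FinStruc

variable {A A' : FinStruc L} {X : Finset ℕ} {k l n : ℕ}

theorem mem_rel_restrict {R : L.Relations n} {t : Fin n → ℕ} :
    t ∈ (A.restrict X).rel R ↔ t ∈ A.rel R ∧ ∀ i, t i ∈ X :=
  Iff.rfl

theorem mem_rel_frame {R : L.Relations n} {t : Fin n → ℕ} :
    t ∈ (A.frame l).rel R ↔ n ≤ l ∧ t ∈ A.rel R := by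
  by_cases h : n ≤ l <;> simp [frame, h]

theorem restrict_eq_self (h : A.carrier ⊆ X) : A.restrict X = A := by
  ext n R t
  · simpa [restrict] using @h _
  · exact and_iff_left_of_imp fun ht i => h (A.rel_mem R t ht i)

theorem carrier_restrict_of_subset (h : X ⊆ A.carrier) : (A.restrict X).carrier = X :=
  Finset.inter_eq_right.2 h

theorem carrier_eq_of_frame_eq (h : A.frame k = A'.frame k) : A.carrier = A'.carrier :=
  congrArg carrier (a₁ := A.frame k) (a₂ := A'.frame k) h

theorem frame_frame_of_le (h : k ≤ l) : (A.frame l).frame k = A.frame k := by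
  ext n R t
  · rfl
  · simp only [mem_rel_frame]
    exact ⟨fun ⟨hn, _, ht⟩ => ⟨hn, ht⟩, fun ⟨hn, ht⟩ => ⟨hn, hn.trans h, ht⟩⟩

theorem frame_restrict_comm : (A.restrict X).frame l = (A.frame l).restrict X := by
  ext n R t
  · rfl
  · simp only [mem_rel_frame, mem_rel_restrict, and_assoc]

/-- The semantic form of the General Irreflexivity axioms: relations hold only of tuples with
pairwise distinct entries. -/
def IsIrreflexive (A : FinStruc L) : Prop :=
  ∀ ⦃n : ℕ⦄ (R : L.Relations n) (t : Fin n → ℕ), t ∈ A.rel R → Function.Injective t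

theorem IsIrreflexive.restrict_frame_of_card_le (hA : A.IsIrreflexive) (hX : X.card ≤ l) :
    (A.frame l).restrict X = A.restrict X := by
  ext n R t
  · rfl
  · simp only [mem_rel_restrict, mem_rel_frame, and_assoc]
    refine and_iff_right_of_imp fun ⟨ht, htX⟩ => hX.trans' ?_
    simpa using Finset.card_le_card_of_injOn t (s := Finset.univ) (by simpa using htX)
      (hA R t ht).injOn

theorem IsIrreflexive.restrict_frame_image (hA : A.IsIrreflexive) (t : Fin n → ℕ) (hn : n ≤ l) :
    (A.frame l).restrict (Finset.univ.image t) = A.restrict (Finset.univ.image t) :=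
  hA.restrict_frame_of_card_le <|
    Finset.card_image_le.trans <| (Finset.card_fin n).trans_le hn

theorem IsIrreflexive.rel_subset_of_restrict_eq (hA : A.IsIrreflexive)
    (h : ∀ X ∈ A.carrier.powersetCard n, A.restrict X = A'.restrict X) (R : L.Relations n) :
    A.rel R ⊆ A'.rel R := by
  intro t ht
  have hmem : Finset.univ.image t ∈ A.carrier.powersetCard n := by
    rw [Finset.mem_powersetCard, Finset.card_image_of_injective _ (hA R t ht), Finset.card_fin]
    exact ⟨Finset.image_subset_iff.2 fun i _ => A.rel_mem R t ht i, rfl⟩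
  have ht' : t ∈ (A.restrict (Finset.univ.image t)).rel R :=
    ⟨ht, fun i => by simp⟩
  rw [h _ hmem] at ht'
  exact ht'.1

theorem IsIrreflexive.frame_succ_eq_of_restrict_eq (hA : A.IsIrreflexive) (hA' : A'.IsIrreflexive)
    (hframe : A.frame k = A'.frame k)
    (h : ∀ X ∈ A.carrier.powersetCard (k + 1), A.restrict X = A'.restrict X) :
    A.frame (k + 1) = A'.frame (k + 1) := by
  have hcarrier : A.carrier = A'.carrier := carrier_eq_of_frame_eq hframe
  ext n R t
  · exact Finset.ext_iff.1 hcarrier _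
  · simp only [mem_rel_frame]
    refine and_congr_right fun hn => ?_
    rcases hn.lt_or_eq with hlt | rfl
    · have hn' : n ≤ k := Nat.lt_succ_iff.1 hlt
      have hmem : t ∈ (A.frame k).rel R ↔ t ∈ (A'.frame k).rel R := by rw [hframe]
      simpa only [mem_rel_frame, hn', true_and] using hmem
    · exact ⟨fun ht => hA.rel_subset_of_restrict_eq h R ht,
        fun ht => hA'.rel_subset_of_restrict_eq (fun X hX => (h X (hcarrier ▸ hX)).symm) R ht⟩

/-- A family of structures on distinct `(k + 1)`-element subsets of the underlying set of a
`k`-frame `A`, all of whose relations have arity at most `k + 1` and whose `k`-frames are induced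
by `A`. -/
structure IsPatchwork {ι : Type*} (A : FinStruc L) (k : ℕ) (G : ι → FinStruc L) : Prop where
  base_frame : A.frame k = A
  carrier_mem : ∀ i, (G i).carrier ∈ A.carrier.powersetCard (k + 1)
  carrier_injective : Function.Injective fun i => (G i).carrier
  frame_succ : ∀ i, (G i).frame (k + 1) = G i
  frame_eq_restrict : ∀ i, (G i).frame k = A.restrict (G i).carrier

namespace IsPatchwork

variable {ι : Type*} {G : ι → FinStruc L}

/-- The structure on the underlying set of `A` whose relations are the unions of those of `A` and
of all the patches `G i`. -/
def glue (hG : IsPatchwork A k G) : FinStruc L where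
  carrier := A.carrier
  rel _ R := A.rel R ∪ ⋃ i, (G i).rel R
  rel_mem n R t ht j := by
    rcases ht with ht | ht
    · exact A.rel_mem R t ht j
    · obtain ⟨i, hi⟩ := Set.mem_iUnion.1 ht
      exact (Finset.mem_powersetCard.1 (hG.carrier_mem i)).1 ((G i).rel_mem R t hi j)

variable {R : L.Relations n} {t : Fin n → ℕ} {i : ι}

theorem mem_rel_glue (hG : IsPatchwork A k G) :
    t ∈ hG.glue.rel R ↔ t ∈ A.rel R ∨ ∃ i, t ∈ (G i).rel R := by
  simp only [glue, Set.mem_union, Set.mem_iUnion]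

theorem arity_le_of_mem_base (hG : IsPatchwork A k G) (ht : t ∈ A.rel R) : n ≤ k := by
  rw [← hG.base_frame] at ht
  exact (mem_rel_frame.1 ht).1

theorem arity_le_of_mem_patch (hG : IsPatchwork A k G) (ht : t ∈ (G i).rel R) : n ≤ k + 1 := by
  rw [← hG.frame_succ] at ht
  exact (mem_rel_frame.1 ht).1

theorem mem_base_of_mem_patch (hG : IsPatchwork A k G) (ht : t ∈ (G i).rel R) (hn : n ≤ k) :
    t ∈ A.rel R := by
  have ht' : t ∈ ((G i).frame k).rel R := mem_rel_frame.2 ⟨hn, ht⟩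
  rw [hG.frame_eq_restrict] at ht'
  exact ht'.1

theorem mem_patch_of_mem_base (hG : IsPatchwork A k G) (ht : t ∈ A.rel R)
    (hti : ∀ j, t j ∈ (G i).carrier) : t ∈ (G i).rel R := by
  have ht' : t ∈ (A.restrict (G i).carrier).rel R := ⟨ht, hti⟩
  rw [← hG.frame_eq_restrict] at ht'
  exact (mem_rel_frame.1 ht').2

theorem patch_eq_of_mem (hG : IsPatchwork A k G) {t : Fin (k + 1) → ℕ}
    (ht : Function.Injective t) {i j : ι} (hi : ∀ a, t a ∈ (G i).carrier)
    (hj : ∀ a, t a ∈ (G j).carrier) : i = j := by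
  have image_eq (m : ι) (hm : ∀ a, t a ∈ (G m).carrier) :
      Finset.univ.image t = (G m).carrier := by
    refine Finset.eq_of_subset_of_card_le (Finset.image_subset_iff.2 fun a _ => hm a) ?_
    rw [Finset.card_image_of_injective _ ht, Finset.card_fin,
      (Finset.mem_powersetCard.1 (hG.carrier_mem m)).2]
  exact hG.carrier_injective ((image_eq i hi).symm.trans (image_eq j hj))

theorem frame_glue (hG : IsPatchwork A k G) : hG.glue.frame k = A := by
  ext n R t
  · rfl
  · rw [mem_rel_frame, mem_rel_glue]
    constructor
    · rintro ⟨hn, ht | ⟨i, ht⟩⟩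
      · exact ht
      · exact hG.mem_base_of_mem_patch ht hn
    · exact fun ht => ⟨hG.arity_le_of_mem_base ht, .inl ht⟩

theorem frame_succ_glue (hG : IsPatchwork A k G) : hG.glue.frame (k + 1) = hG.glue := by
  ext n R t
  · rfl
  · rw [mem_rel_frame, mem_rel_glue]
    refine and_iff_right_of_imp ?_
    rintro (ht | ⟨i, ht⟩)
    · exact (hG.arity_le_of_mem_base ht).trans k.le_succ
    · exact hG.arity_le_of_mem_patch ht

theorem isIrreflexive_glue (hG : IsPatchwork A k G) (hA : A.IsIrreflexive)
    (hGirr : ∀ i, (G i).IsIrreflexive) : hG.glue.IsIrreflexive := by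
  intro n R t ht
  rcases hG.mem_rel_glue.1 ht with ht | ⟨i, ht⟩
  · exact hA R t ht
  · exact hGirr i R t ht

theorem restrict_glue (hG : IsPatchwork A k G) (hGirr : ∀ i, (G i).IsIrreflexive) (j : ι) :
    hG.glue.restrict (G j).carrier = G j := by
  ext n R t
  · rw [carrier_restrict_of_subset (A := hG.glue)
      (Finset.mem_powersetCard.1 (hG.carrier_mem j)).1]
  · rw [mem_rel_restrict, mem_rel_glue]
    constructor
    · rintro ⟨ht | ⟨i, ht⟩, htj⟩
      · exact hG.mem_patch_of_mem_base ht htj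
      · rcases (hG.arity_le_of_mem_patch ht).lt_or_eq with hlt | rfl
        · exact hG.mem_patch_of_mem_base
            (hG.mem_base_of_mem_patch ht (Nat.lt_succ_iff.1 hlt)) htj
        · obtain rfl := hG.patch_eq_of_mem (hGirr i R t ht) ((G i).rel_mem R t ht) htj
          exact ht
    · exact fun ht => ⟨.inr ⟨j, ht⟩, (G j).rel_mem R t ht⟩

end IsPatchwork

section Relational

variable [L.IsRelational]

/-- The inclusion of an induced substructure, as an embedding of first-order structures. -/
def restrictEmbedding (A : FinStruc L) (X : Finset ℕ) :
    {x : ℕ // x ∈ (A.restrict X).carrier} ↪[L] {x : ℕ // x ∈ A.carrier} where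
  toFun x := ⟨x, Finset.mem_of_mem_inter_left x.2⟩
  inj' _ _ h := Subtype.ext (Subtype.mk.inj h)
  map_fun' f := isEmptyElim f
  map_rel' _ x := ⟨fun h => ⟨h, fun i => Finset.mem_of_mem_inter_right (x i).2⟩, fun h => h.1⟩

theorem realize_restrictEmbedding_comp {ψ : L.BoundedFormula Empty n} (hψ : ψ.IsQF)
    (a : Fin n → {x : ℕ // x ∈ (A.restrict X).carrier}) :
    ψ.Realize default (A.restrictEmbedding X ∘ a) ↔ ψ.Realize default a := by
  rw [← hψ.realize_embedding (A.restrictEmbedding X) (v := default),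
    Subsingleton.elim (A.restrictEmbedding X ∘ default) default]

theorem sat_alls_rel_imp (R : L.Relations n) (ψ : L.BoundedFormula Empty n) :
    A.Sat (((Relations.boundedFormula R fun k => Term.var (Sum.inr k)).imp ψ).alls) ↔
      ∀ a : Fin n → {x : ℕ // x ∈ A.carrier}, (fun i => (a i : ℕ)) ∈ A.rel R →
        ψ.Realize default a := by
  rw [Sat, Sentence.Realize, BoundedFormula.realize_alls]
  rfl

end Relational

end FinStruc

open FinStruc

section LocalClass

variable [L.IsRelational] {K : Set (FinStruc L)} {A B C F S : FinStruc L} {k l : ℕ}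

namespace IsLocalClass

theorem isIrreflexive (hK : IsLocalClass K) (hA : A ∈ K) : A.IsIrreflexive := by
  obtain ⟨Φ, -, hGI, rfl⟩ := hK
  intro n R t ht i j hij
  by_contra hne
  have hsat := (sat_alls_rel_imp R _).1 (hA _ (hGI ⟨n, R, i, j, hne, rfl⟩))
    (fun i => ⟨t i, A.rel_mem R t ht i⟩) ht
  exact BoundedFormula.realize_not.1 hsat (Subtype.ext hij)

theorem restrict_mem (hK : IsLocalClass K) (hA : A ∈ K) (X : Finset ℕ) : A.restrict X ∈ K := by
  obtain ⟨Φ, hlocal, -, rfl⟩ := hK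
  intro φ hφ
  obtain ⟨m, -, R, ψ, hψ, rfl⟩ := hlocal φ hφ
  refine (sat_alls_rel_imp R ψ).2 fun a ha => ?_
  rw [← realize_restrictEmbedding_comp hψ]
  exact (sat_alls_rel_imp R ψ).1 (hA _ hφ) _ ha.1

theorem mem_of_forall_exists_restrict_mem (hK : IsLocalClass K)
    (h : ∀ (n : ℕ) (R : L.Relations n), ∀ t ∈ C.rel R,
      ∃ X : Finset ℕ, (∀ i, t i ∈ X) ∧ C.restrict X ∈ K) : C ∈ K := by
  obtain ⟨Φ, hlocal, -, rfl⟩ := hK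
  intro φ hφ
  obtain ⟨m, -, R, ψ, hψ, rfl⟩ := hlocal φ hφ
  refine (sat_alls_rel_imp R ψ).2 fun a ha => ?_
  obtain ⟨X, haX, hX⟩ := h m R _ ha
  let b : Fin m → {x : ℕ // x ∈ (C.restrict X).carrier} :=
    fun i => ⟨a i, Finset.mem_inter.2 ⟨(a i).2, haX i⟩⟩
  have hb : ψ.Realize default b := (sat_alls_rel_imp R ψ).1 (hX _ hφ) b ⟨ha, haX⟩
  exact (realize_restrictEmbedding_comp hψ b).2 hb

theorem frame_mem (hK : IsLocalClass K) (hA : A ∈ K) (l : ℕ) : A.frame l ∈ K := by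
  refine hK.mem_of_forall_exists_restrict_mem fun n R t ht =>
    ⟨Finset.univ.image t, fun i => by simp, ?_⟩
  rw [(hK.isIrreflexive hA).restrict_frame_image t (mem_rel_frame.1 ht).1]
  exact hK.restrict_mem hA _

theorem glue_mem (hK : IsLocalClass K) {ι : Type*} {G : ι → FinStruc L} (hG : IsPatchwork A k G)
    (hA : A ∈ K) (hGK : ∀ i, G i ∈ K) : hG.glue ∈ K := by
  have hGirr (i : ι) : (G i).IsIrreflexive := hK.isIrreflexive (hGK i)
  have hirr : hG.glue.IsIrreflexive := hG.isIrreflexive_glue (hK.isIrreflexive hA) hGirr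
  refine hK.mem_of_forall_exists_restrict_mem fun n R t ht => ?_
  rcases hG.mem_rel_glue.1 ht with ht | ⟨i, ht⟩
  · refine ⟨Finset.univ.image t, fun i => by simp, ?_⟩
    rw [← hirr.restrict_frame_image t (hG.arity_le_of_mem_base ht), hG.frame_glue]
    exact hK.restrict_mem hA _
  · refine ⟨(G i).carrier, (G i).rel_mem R t ht, ?_⟩
    rw [hG.restrict_glue hGirr]
    exact hGK i

theorem mem_KsetFr_iff (hK : IsLocalClass K) (h : k ≤ l) :
    F ∈ KsetFr K S.carrier l S k ↔ F ∈ K ∧ F.frame l = F ∧ F.frame k = S.frame k := by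
  constructor
  · rintro ⟨T, hT, hcarrier, hframe, rfl⟩
    refine ⟨hK.frame_mem hT l, frame_frame_of_le le_rfl, ?_⟩
    rw [frame_frame_of_le h, ← hframe, restrict_eq_self (A := T.frame k) hcarrier.subset]
  · rintro ⟨hF, hl, hframe⟩
    refine ⟨F, hF, carrier_eq_of_frame_eq hframe, ?_, hl.symm⟩
    rw [hframe]
    exact restrict_eq_self (A := S.frame k) subset_rfl

theorem restrict_mem_KsetFr (hK : IsLocalClass K) (h : k ≤ l) (hF : F ∈ KsetFr K S.carrier l S k)
    (X : Finset ℕ) :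
    F.restrict X ∈ KsetFr K (S.restrict X).carrier l (S.restrict X) k := by
  rw [hK.mem_KsetFr_iff h] at hF ⊢
  obtain ⟨hFK, hl, hframe⟩ := hF
  exact ⟨hK.restrict_mem hFK X, by rw [frame_restrict_comm, hl],
    by rw [frame_restrict_comm, frame_restrict_comm, hframe]⟩

theorem eq_of_mem_KsetFr_of_restrict_eq (hK : IsLocalClass K) {F' : FinStruc L}
    (hF : F ∈ KsetFr K S.carrier (k + 1) S k) (hF' : F' ∈ KsetFr K S.carrier (k + 1) S k)
    (h : ∀ X ∈ S.carrier.powersetCard (k + 1), F.restrict X = F'.restrict X) : F = F' := by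
  obtain ⟨hFK, hsucc, hframe⟩ := (hK.mem_KsetFr_iff k.le_succ).1 hF
  obtain ⟨hFK', hsucc', hframe'⟩ := (hK.mem_KsetFr_iff k.le_succ).1 hF'
  have hcarrier : F.carrier = S.carrier := carrier_eq_of_frame_eq hframe
  rw [← hsucc, ← hsucc']
  exact (hK.isIrreflexive hFK).frame_succ_eq_of_restrict_eq (hK.isIrreflexive hFK')
    (hframe.trans hframe'.symm) (hcarrier ▸ h)

theorem exists_mem_KsetFr_forall_restrict_eq (hK : IsLocalClass K) (hB : B ∈ K)
    {G : B.carrier.powersetCard (k + 1) → FinStruc L}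
    (hG : ∀ X : B.carrier.powersetCard (k + 1),
      G X ∈ KsetFr K (B.restrict X).carrier (k + 1) (B.restrict X) k) :
    ∃ F ∈ KsetFr K B.carrier (k + 1) B k,
      ∀ X : B.carrier.powersetCard (k + 1), F.restrict X = G X := by
  have hG' := fun X => (hK.mem_KsetFr_iff k.le_succ).1 (hG X)
  have hcarrier (X : B.carrier.powersetCard (k + 1)) : (G X).carrier = X :=
    (carrier_eq_of_frame_eq (hG' X).2.2).trans
      (carrier_restrict_of_subset (Finset.mem_powersetCard.1 X.2).1)
  have hpatch : IsPatchwork (B.frame k) k G :=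
    { base_frame := frame_frame_of_le le_rfl
      carrier_mem := fun X => (hcarrier X).symm ▸ X.2
      carrier_injective := fun X Y hXY =>
        Subtype.ext ((hcarrier X).symm.trans (Eq.trans hXY (hcarrier Y)))
      frame_succ := fun X => (hG' X).2.1
      frame_eq_restrict := fun X => by rw [(hG' X).2.2, frame_restrict_comm, hcarrier] }
  refine ⟨hpatch.glue, (hK.mem_KsetFr_iff k.le_succ).2
    ⟨hK.glue_mem hpatch (hK.frame_mem hB k) fun X => (hG' X).1,
      hpatch.frame_succ_glue, hpatch.frame_glue⟩, fun X => ?_⟩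
  rw [← hcarrier X]
  exact hpatch.restrict_glue (fun Y => hK.isIrreflexive (hG' Y).1) X

end IsLocalClass

open scoped Cardinal in
theorem statement_10_general (hK : IsLocalClass K) (hB : B ∈ K) (k : ℕ) :
    #(KsetFr K B.carrier (k + 1) B k) =
      ∏ X ∈ B.carrier.powersetCard (k + 1),
        #(KsetFr K (B.restrict X).carrier (k + 1) (B.restrict X) k) := by
  let restrictions (F : KsetFr K B.carrier (k + 1) B k) (X : B.carrier.powersetCard (k + 1)) :
      KsetFr K (B.restrict X).carrier (k + 1) (B.restrict X) k :=
    ⟨F.1.restrict X, hK.restrict_mem_KsetFr k.le_succ F.2 X⟩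
  have hinj : Function.Injective restrictions := fun F F' h =>
    Subtype.ext <| hK.eq_of_mem_KsetFr_of_restrict_eq F.2 F'.2 fun X hX =>
      congrArg Subtype.val (congrFun h ⟨X, hX⟩)
  have hsurj : Function.Surjective restrictions := fun G => by
    obtain ⟨F, hF, hFG⟩ := hK.exists_mem_KsetFr_forall_restrict_eq hB
      (G := fun X => (G X).1) fun X => (G X).2
    exact ⟨⟨F, hF⟩, funext fun X => Subtype.ext (hFG X)⟩
  have hcard := Cardinal.mk_congr (Equiv.ofBijective restrictions ⟨hinj, hsurj⟩)
  rw [Cardinal.mk_pi, Cardinal.prod_eq_of_fintype, Cardinal.lift_uzero] at hcard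
  exact hcard.trans (Finset.prod_coe_sort _ fun X =>
    #(KsetFr K (B.restrict X).carrier (k + 1) (B.restrict X) k))

end LocalClass

/-- Independence of frame counts: `N(B,k)` is the product over the `(k+1)`-element subsets `X`
of the underlying set of `B` of `N(B↾X, k)`. -/
theorem statement_10 (L : FirstOrder.Language.{u, v}) [L.IsRelational]
    [∀ n, Finite (L.Relations n)] (K : Set (FinStruc L)) (hK : IsLocalClass K)
    (B : FinStruc L) (hB : B ∈ K) (k : ℕ) (hk : k < B.carrier.card) :
    Ncount K B k =
      ∏ X ∈ Finset.powersetCard (k + 1) B.carrier, Ncount K (B.restrict X) k := by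
  simpa only [Ncount, ← Nat.card_coe_set_eq, Nat.card, map_prod] using
    congrArg Cardinal.toNat (statement_10_general hK hB k)
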